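/- Let D be a division ring with center ℚ(i) and dim_{ℚ(i)} D = n² where n ≥ 2, presented as a cyclic algebra: let E ⊆ D be a subfield with ℚ(i) ⊆ E and [E : ℚ(i)] = n such that E/ℚ(i) is Galois with cyclic Galois group generated by σ, and let u ∈ D be an invertible element satisfying x·u = u·σ(x) for all x ∈ E and uⁿ = γ for some nonzero γ ∈ ℚ(i). Let Λ be a ℤ-order in D that contains the natural order Λ_nat = O_E + u·O_E + u²·O_E + … + u^{n-1}·O_E. Then the subgroup O_E^* of the unit group Λ* has infinite index: [Λ* : O_E^*] = ∞, i.e. Λ* is not a finite union of cosets of O_E^*. -/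

import Mathlib

/-- The field `ℚ(i)` of Gaussian rationals, as a subfield of `ℂ`. -/
noncomputable def Qi : IntermediateField ℚ ℂ := IntermediateField.adjoin ℚ {Complex.I}

open NumberField in
lemma aux_Qi_finrank : Module.finrank ℚ ↥Qi = 2 := by
  have hI : IsIntegral ℚ Complex.I := by
    refine ⟨Polynomial.X ^ 2 + 1, ?_, by simp⟩
    monicity!
  have h1 : Module.finrank ℚ ↥Qi = (minpoly ℚ Complex.I).natDegree :=
    IntermediateField.adjoin.finrank hI
  have h2 : (minpoly ℚ Complex.I).natDegree ≤ 2 := by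
    have : (Polynomial.X ^ 2 + 1 : Polynomial ℚ).natDegree = 2 := by compute_degree!
    rw [← this]
    refine Polynomial.natDegree_le_of_dvd (minpoly.dvd _ _ (by simp)) ?_
    intro h0
    rw [h0] at this
    simp at this
  have h3 : (minpoly ℚ Complex.I).natDegree ≠ 1 := by
    intro h
    obtain ⟨q, hq⟩ := (minpoly.natDegree_eq_one_iff).1 h
    have := congrArg Complex.im hq
    simp at this
  have h4 := minpoly.natDegree_pos hI
  omega

lemma aux_Qi_nf : NumberField ↥Qi where
  to_charZero := inferInstance
  to_finiteDimensional := FiniteDimensional.of_finrank_pos (by rw [aux_Qi_finrank]; norm_num)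

open NumberField in
lemma aux_Qi_units [NumberField ↥Qi] (x : (𝓞 ↥Qi)ˣ) : ∃ k : ℕ, 0 < k ∧ x ^ k = 1 := by
  have hI : Complex.I ∈ Qi := IntermediateField.mem_adjoin_simple_self ℚ Complex.I
  have hc : IsTotallyComplex ↥Qi := by
    constructor
    intro v
    rw [← InfinitePlace.not_isReal_iff_isComplex]
    rintro ⟨φ, hφ, -⟩
    have h1 : φ ⟨Complex.I, hI⟩ * φ ⟨Complex.I, hI⟩ = -1 := by
      rw [← map_mul, ← map_one φ, ← map_neg]
      congr 1
      ext
      simp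
    have h2 : (starRingEnd ℂ) (φ ⟨Complex.I, hI⟩) = φ ⟨Complex.I, hI⟩ := by
      have := DFunLike.congr_fun hφ.star_eq ⟨Complex.I, hI⟩
      simpa using this
    have h3 := Complex.conj_eq_iff_im.1 h2
    have h4 := congrArg Complex.re h1
    simp [h3] at h4
    nlinarith [mul_self_nonneg (φ ⟨Complex.I, hI⟩).re]
  have hr : Units.rank ↥Qi = 0 := by
    have h1 := InfinitePlace.card_eq_nrRealPlaces_add_nrComplexPlaces ↥Qi
    have h2 := InfinitePlace.card_add_two_mul_card_eq_rank ↥Qi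
    have h3 := IsTotallyComplex.nrRealPlaces_eq_zero ↥Qi
    rw [aux_Qi_finrank] at h2
    unfold Units.rank
    omega
  obtain ⟨⟨ζ, e⟩, h, -⟩ := Units.exist_unique_eq_mul_prod ↥Qi x
  have : IsEmpty (Fin (Units.rank ↥Qi)) := by rw [hr]; infer_instance
  simp at h
  obtain ⟨k, hk, h'⟩ := isOfFinOrder_iff_pow_eq_one.1 <| (CommGroup.mem_torsion _).1 ζ.2
  exact ⟨k, hk, by rw [h, h']⟩

open NumberField in
lemma aux_unit (E : Type) [Field E] [NumberField E] [Algebra ↥Qi E]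
    (hE : 2 ≤ Module.finrank ↥Qi E) :
    ∃ e : (𝓞 E)ˣ, ∀ M : ℕ, 0 < M → ∀ q : ↥Qi,
      algebraMap ↥Qi E q ≠ algebraMap (𝓞 E) E ((e ^ M : (𝓞 E)ˣ) : 𝓞 E) := by
  haveI := aux_Qi_nf
  have hd : Module.finrank ℚ E ≥ 4 := by
    rw [← Module.finrank_mul_finrank ℚ ↥Qi E, aux_Qi_finrank]
    omega
  have hr : 0 < Units.rank E := by
    have h1 := InfinitePlace.card_eq_nrRealPlaces_add_nrComplexPlaces E
    have h2 := InfinitePlace.card_add_two_mul_card_eq_rank E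
    unfold Units.rank
    omega
  let i : Fin (Units.rank E) := ⟨0, hr⟩
  have hinf : ∀ M : ℕ, 0 < M → Units.fundSystem E i ^ M ≠ 1 := by
    intro M hM h
    have ht : Units.fundSystem E i ∈ Units.torsion E :=
      (CommGroup.mem_torsion _).2 (isOfFinOrder_iff_pow_eq_one.2 ⟨M, hM, h⟩)
    have h1 := Units.logEmbedding_fundSystem E i
    rw [Units.dirichletUnitTheorem.logEmbedding_eq_zero_iff.2 ht] at h1
    exact (Units.basisUnitLattice E).ne_zero i (Subtype.ext h1.symm)
  refine ⟨Units.fundSystem E i, fun M hM q hq => ?_⟩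
  set y := Units.fundSystem E i ^ M with hy
  have hinj := (algebraMap ↥Qi E).injective
  have hy1 : (algebraMap (𝓞 E) E (y : 𝓞 E)) * (algebraMap (𝓞 E) E ((y⁻¹ : (𝓞 E)ˣ) : 𝓞 E)) = 1 := by
    rw [← map_mul]; simp
  have hq0 : q ≠ 0 := by
    rintro rfl
    rw [← hq] at hy1
    simp at hy1
  have hqi : IsIntegral ℤ q := by
    rw [← isIntegral_algebraMap_iff (B := E) hinj, hq]
    exact RingOfIntegers.isIntegral_coe _
  have hqi' : IsIntegral ℤ q⁻¹ := by
    rw [← isIntegral_algebraMap_iff (B := E) hinj, map_inv₀, hq, inv_eq_of_mul_eq_one_right hy1]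
    exact RingOfIntegers.isIntegral_coe _
  let x : (𝓞 ↥Qi)ˣ := ⟨⟨q, hqi⟩, ⟨q⁻¹, hqi'⟩, by ext1; exact mul_inv_cancel₀ hq0,
    by ext1; exact inv_mul_cancel₀ hq0⟩
  obtain ⟨k, hk, hx⟩ := aux_Qi_units x
  have hqk : q ^ k = 1 := by
    have := congrArg (fun z : (𝓞 ↥Qi)ˣ => ((z : 𝓞 ↥Qi) : ↥Qi)) hx
    rw [Units.val_pow_eq_pow_val] at this
    exact this
  apply hinf (M * k) (Nat.mul_pos hM hk)
  rw [pow_mul, ← hy]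
  ext
  have := congrArg (algebraMap ↥Qi E) hqk
  rw [map_pow, hq] at this
  simpa using this

/-- Let `D` be a `ℚ(i)`-central division algebra of index `n ≥ 2`, presented as a cyclic
algebra: `E/ℚ(i)` a cyclic Galois extension of degree `n` embedded in `D` via `ι`, with
Galois group generated by `σ`, and `u ∈ D` invertible with `x·u = u·σ(x)` for all
`x ∈ E` and `uⁿ = γ ∈ ℚ(i)*`.  If `Λ` is a `ℤ`-order in `D` containing the natural
order `O_E ⊕ u·O_E ⊕ ⋯ ⊕ u^{n-1}·O_E`, then the group of units of `Λ` is not a finite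
union of cosets of `O_E^*`, i.e. `[Λ* : O_E^*] = ∞`. -/
theorem index_units_ring_of_integers_infinite (n : ℕ) (hn : 2 ≤ n) (D : Type)
    [DivisionRing D] [CharZero D] [Algebra ↥Qi D]
    [Algebra.IsCentral ↥Qi D] (hdim : Module.finrank ↥Qi D = n ^ 2)
    (E : Type) [Field E] [NumberField E] [Algebra ↥Qi E]
    (hdeg : Module.finrank ↥Qi E = n) [IsGalois ↥Qi E]
    (σ : E ≃ₐ[↥Qi] E) (hσ : ∀ g : E ≃ₐ[↥Qi] E, g ∈ Subgroup.zpowers σ)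
    (ι : E →ₐ[↥Qi] D) (hι : Function.Injective ι)
    (u : D) (hu : IsUnit u)
    (hcomm : ∀ x : E, ι x * u = u * ι (σ x))
    (γ : ↥Qi) (hγ : γ ≠ 0) (hun : u ^ n = algebraMap ↥Qi D γ)
    (Λ : Subring D)
    (hfg : AddSubgroup.FG Λ.toAddSubgroup)
    (hspan : Submodule.span ℚ (Λ : Set D) = ⊤)
    (hnat : ∀ (k : Fin n) (x : NumberField.RingOfIntegers E),
      u ^ (k : ℕ) * ι (algebraMap (NumberField.RingOfIntegers E) E x) ∈ Λ) :
    ¬ ∃ s : Finset D, ∀ v : D,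
        (v ∈ Λ ∧ ∃ w ∈ Λ, v * w = 1 ∧ w * v = 1) →
        ∃ a ∈ s, ∃ e : (NumberField.RingOfIntegers E)ˣ,
          v = a * ι (algebraMap (NumberField.RingOfIntegers E) E
            (e : NumberField.RingOfIntegers E)) := by
  rintro ⟨s, hs⟩
  obtain ⟨e, he⟩ := aux_unit E (by omega)
  have hfd : FiniteDimensional ↥Qi E := FiniteDimensional.of_finrank_pos (by omega)
  let j : NumberField.RingOfIntegers E →+* D :=
    (ι : E →+* D).comp (algebraMap (NumberField.RingOfIntegers E) E)
  have hj : ∀ x, j x = ι (algebraMap (NumberField.RingOfIntegers E) E x) := fun x => rfl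
  have hjΛ : ∀ x, j x ∈ Λ := fun x => by
    have := hnat ⟨0, by omega⟩ x
    simpa [hj] using this
  have huΛ : u ∈ Λ := by
    have := hnat ⟨1, by omega⟩ 1
    simpa using this
  have hu0 : u ≠ 0 := hu.ne_zero
  have hfix : ∀ y : E, σ y = y → ∃ q : ↥Qi, algebraMap ↥Qi E q = y := by
    intro y hy
    refine (IsGalois.mem_range_algebraMap_iff_fixed y).2 fun g => ?_
    have hst : σ ∈ MulAction.stabilizer (E ≃ₐ[↥Qi] E) y := hy
    have : Subgroup.zpowers σ ≤ MulAction.stabilizer (E ≃ₐ[↥Qi] E) y := by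
      rwa [Subgroup.zpowers_le]
    exact this (hσ g)
  -- u is not in the image of E
  have huE : ∀ x : E, u ≠ ι x := by
    intro x hx
    have hx0 : ι x ≠ 0 := hx ▸ hu0
    obtain ⟨q, hq⟩ := hfix (algebraMap (NumberField.RingOfIntegers E) E e) (by
      have h := hcomm (algebraMap (NumberField.RingOfIntegers E) E e)
      rw [hx, ← map_mul, ← map_mul] at h
      have h := hι h
      rw [mul_comm] at h
      exact (mul_left_cancel₀ (fun h0 => hx0 (by rw [h0, map_zero])) h).symm)
    exact he 1 one_pos q (by simpa using hq)
  have hb0 : 1 + u ≠ 0 := by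
    intro h
    exact huE (-1) (by rw [map_neg, map_one]; exact eq_neg_of_add_eq_zero_right h)
  -- denominators
  have hden : ∀ d : D, ∃ N : ℕ, 0 < N ∧ (N : D) * d ∈ Λ := by
    intro d
    have hd : d ∈ Submodule.span ℚ (Λ : Set D) := by rw [hspan]; trivial
    induction hd using Submodule.span_induction with
    | mem x hx => exact ⟨1, one_pos, by simpa using hx⟩
    | zero => exact ⟨1, one_pos, by simp⟩
    | add x y _ _ hx hy =>
      obtain ⟨N, hN, hx⟩ := hx
      obtain ⟨M, hM, hy⟩ := hy
      refine ⟨N * M, Nat.mul_pos hN hM, ?_⟩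
      have : ((N * M : ℕ) : D) * (x + y) = (M : D) * ((N : D) * x) + (N : D) * ((M : D) * y) := by
        rw [mul_add, ← mul_assoc, ← mul_assoc, ← Nat.cast_mul, ← Nat.cast_mul, Nat.mul_comm M N]
      rw [this]
      exact Λ.add_mem (Λ.mul_mem (natCast_mem Λ M) hx) (Λ.mul_mem (natCast_mem Λ N) hy)
    | smul c x _ hx =>
      obtain ⟨N, hN, hx⟩ := hx
      refine ⟨N * c.den, Nat.mul_pos hN c.den_pos, ?_⟩
      have : ((N * c.den : ℕ) : D) * (c • x) = (c.num : D) * ((N : D) * x) := by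
        have h1 : (c.den : D) * (c : D) = (c.num : D) := by
          have := Rat.den_mul_eq_num c
          exact_mod_cast congrArg (fun t : ℚ => (t : D)) this
        rw [Rat.smul_def, ← mul_assoc, ← mul_assoc, Nat.cast_mul, mul_assoc (N : D), h1]
        rw [(Nat.cast_commute N (c.num : D)).eq]
      rw [this]
      exact Λ.mul_mem (intCast_mem Λ _) hx
  set b : D := 1 + u with hb
  have hbΛ : b ∈ Λ := Λ.add_mem Λ.one_mem huΛ
  obtain ⟨N, hN, hNb⟩ := hden b⁻¹
  have hconj : ∀ x : NumberField.RingOfIntegers E, b * j (1 + N * x) * b⁻¹ ∈ Λ := by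
    intro x
    have : b * j (1 + N * x) * b⁻¹ = 1 + b * j x * ((N : D) * b⁻¹) := by
      rw [map_add, map_one, map_mul, map_natCast, mul_add, add_mul, mul_one, mul_inv_cancel₀ hb0,
        (Nat.cast_commute N (j x)).eq]
      simp only [mul_assoc]
    rw [this]
    exact Λ.add_mem Λ.one_mem (Λ.mul_mem (Λ.mul_mem hbΛ (hjΛ x)) hNb)
  -- a power of e congruent to one
  obtain ⟨m, hm, hem⟩ : ∃ m : ℕ, 0 < m ∧ ∀ z : ℤ, ∃ x : NumberField.RingOfIntegers E,
      (((e ^ m) ^ z : (NumberField.RingOfIntegers E)ˣ) : NumberField.RingOfIntegers E)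
        = 1 + N * x := by
    let I : Ideal (NumberField.RingOfIntegers E) := Ideal.span {(N : NumberField.RingOfIntegers E)}
    have hI : I ≠ ⊥ := by
      simp only [I, Ne, Ideal.span_singleton_eq_bot, Nat.cast_eq_zero]
      omega
    haveI : Finite (NumberField.RingOfIntegers E ⧸ I) := I.finiteQuotientOfFreeOfNeBot hI
    let f := Units.map (Ideal.Quotient.mk I).toMonoidHom
    obtain ⟨m, hm, h⟩ := isOfFinOrder_iff_pow_eq_one.1 (isOfFinOrder_of_finite (f e))
    refine ⟨m, hm, fun z => ?_⟩
    have h1 : f ((e ^ m) ^ z) = 1 := by rw [map_zpow, map_pow, h, one_zpow]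
    have h2 : Ideal.Quotient.mk I
      (((e ^ m) ^ z : (NumberField.RingOfIntegers E)ˣ) : NumberField.RingOfIntegers E)
        = Ideal.Quotient.mk I 1 := by
      rw [map_one]
      exact congrArg Units.val h1
    rw [Ideal.Quotient.eq, Ideal.mem_span_singleton] at h2
    obtain ⟨x, hx⟩ := h2
    exact ⟨x, by rw [← hx]; ring⟩
  set y := e ^ m with hy
  have hv : ∀ k : ℕ, ∃ a ∈ s, ∃ e' : (NumberField.RingOfIntegers E)ˣ,
      b * j ((y ^ (k : ℤ) : (NumberField.RingOfIntegers E)ˣ) : NumberField.RingOfIntegers E) * b⁻¹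
        = a * j (e' : NumberField.RingOfIntegers E) := by
    intro k
    have hmem : ∀ z : ℤ, b * j ((y ^ z : (NumberField.RingOfIntegers E)ˣ) :
        NumberField.RingOfIntegers E) * b⁻¹ ∈ Λ := by
      intro z
      obtain ⟨x, hx⟩ := hem z
      rw [hx]
      exact hconj x
    have hinv : ∀ z : ℤ, b * j ((y ^ z : (NumberField.RingOfIntegers E)ˣ) :
        NumberField.RingOfIntegers E) * b⁻¹ * (b * j ((y ^ (-z) : (NumberField.RingOfIntegers E)ˣ) :
        NumberField.RingOfIntegers E) * b⁻¹) = 1 := by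
      intro z
      have h1 : j ((y ^ z : (NumberField.RingOfIntegers E)ˣ) : NumberField.RingOfIntegers E) *
          j ((y ^ (-z) : (NumberField.RingOfIntegers E)ˣ) : NumberField.RingOfIntegers E) = 1 := by
        rw [← map_mul, ← Units.val_mul, ← zpow_add, add_neg_cancel, zpow_zero, Units.val_one,
          map_one]
      simp only [mul_assoc]
      rw [inv_mul_cancel_left₀ hb0, ← mul_assoc (j _) (j _), h1, one_mul, mul_inv_cancel₀ hb0]
    have h2 := hinv (-(k : ℤ))
    rw [neg_neg] at h2
    exact hs _ ⟨hmem k, _, hmem (-k), hinv k, h2⟩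
  choose a ha e' hae using hv
  obtain ⟨k, l, hkl, haa⟩ : ∃ k l, k ≠ l ∧ a k = a l := by
    obtain ⟨k, l, h, h'⟩ := Finite.exists_ne_map_eq_of_infinite (fun k => (⟨a k, ha k⟩ : s))
    exact ⟨k, l, h, congrArg Subtype.val h'⟩
  wlog hlt : k < l generalizing k l
  · exact this l k hkl.symm haa.symm (by omega)
  obtain ⟨r, rfl⟩ := Nat.exists_eq_add_of_lt hlt
  set t : NumberField.RingOfIntegers E := ((y ^ (r + 1) : (NumberField.RingOfIntegers E)ˣ) :
    NumberField.RingOfIntegers E) with ht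
  set w : NumberField.RingOfIntegers E := (((e' k)⁻¹ * e' (k + r + 1) :
    (NumberField.RingOfIntegers E)ˣ) : NumberField.RingOfIntegers E) with hw
  have key : b * j t = j w * b := by
    have h1 := hae k
    have h2 := hae (k + r + 1)
    have h3 : j ((y ^ ((k + r + 1 : ℕ) : ℤ) : (NumberField.RingOfIntegers E)ˣ) :
        NumberField.RingOfIntegers E) = j ((y ^ (k : ℤ) : (NumberField.RingOfIntegers E)ˣ) :
        NumberField.RingOfIntegers E) * j t := by
      rw [ht, ← map_mul, ← Units.val_mul, zpow_natCast, zpow_natCast, ← pow_add, add_assoc]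
    have h4 : j (e' (k + r + 1) : NumberField.RingOfIntegers E) = j (e' k) * j w := by
      rw [hw, ← map_mul, ← Units.val_mul, mul_inv_cancel_left]
    rw [h3, h4, ← haa, ← mul_assoc (a k), ← h1] at h2
    set p := j ((y ^ (k : ℤ) : (NumberField.RingOfIntegers E)ˣ) : NumberField.RingOfIntegers E)
      with hp
    have hp0 : p ≠ 0 := by
      have : IsUnit p := (Units.isUnit _).map j
      exact this.ne_zero
    simp only [mul_assoc] at h2
    have h5 := mul_left_cancel₀ hp0 (mul_left_cancel₀ hb0 h2)
    have h6 : j t = b⁻¹ * j w * b := by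
      have h7 := congrArg (· * b) h5
      simpa [mul_assoc, hb0] using h7
    rw [h6, mul_assoc, mul_inv_cancel_left₀ hb0]
  have hyz : algebraMap (NumberField.RingOfIntegers E) E t = algebraMap _ E w ∧
      σ (algebraMap (NumberField.RingOfIntegers E) E w) = algebraMap _ E t := by
    rw [hj, hj, hb, add_mul, mul_add, one_mul, mul_one, hcomm] at key
    set T := algebraMap (NumberField.RingOfIntegers E) E t
    set W := algebraMap (NumberField.RingOfIntegers E) E w
    have h1 : u * ι (σ W - T) = ι (T - W) := by
      rw [map_sub, map_sub, mul_sub, sub_eq_sub_iff_add_eq_add, add_comm, ← key]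
    have h2 : σ W - T = 0 := by
      by_contra h
      have h3 : ι (σ W - T) ≠ 0 := fun h0 => h (hι (by rw [h0, map_zero]))
      apply huE ((T - W) * (σ W - T)⁻¹)
      rw [map_mul, ← h1, mul_assoc, ← map_mul, mul_inv_cancel₀ h, map_one, mul_one]
    rw [h2, map_zero, mul_zero] at h1
    have h4 : T - W = 0 := hι (by rw [← h1, map_zero])
    exact ⟨sub_eq_zero.1 h4, sub_eq_zero.1 h2⟩
  obtain ⟨q, hq⟩ := hfix _ (hyz.2.trans hyz.1)
  refine he (m * (r + 1)) (Nat.mul_pos hm (Nat.succ_pos r)) q ?_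
  rw [hq, ← hyz.1, ht, hy, pow_mul]
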